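/- (Outcome-weighted necessary condition, second difference) Under the IV assumptions (Independence, Relevance, Monotonicity, Exclusion), it holds that ΔE[(D∧ − D2)·Y | Z] = E[Y(0,1); {C1,A2}] − E[Y(0,1); {N1,C2}]. Consequently, if μ({C1,A2}) = μ({N1,C2}) =: p2 > 0, then ΔE[(D∧ − D2)·Y | Z] = (E[Y(0,1) | {C1,A2}] − E[Y(0,1) | {N1,C2}])·p2, which is zero when p2 = 0 or when the two conditional expectations agree. (Proposition 2, eq. (12), from the appendix identity) -/

import Mathlib

open MeasureTheory ProbabilityTheory

noncomputable section

variable {Ω : Type*} [MeasurableSpace Ω]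

/-- Observed first-part treatment: `D1 = D1(1)·Z + D1(0)·(1−Z)`. -/
def obsD1 (Z : Ω → ℝ) (D1 : Bool → Ω → ℝ) (ω : Ω) : ℝ :=
  D1 true ω * Z ω + D1 false ω * (1 - Z ω)

/-- Observed second-part treatment. -/
def obsD2 (Z : Ω → ℝ) (D1 : Bool → Ω → ℝ) (D2 : Bool → Bool → Ω → ℝ) (ω : Ω) : ℝ :=
  (D2 true true ω * obsD1 Z D1 ω + D2 true false ω * (1 - obsD1 Z D1 ω)) * Z ω +
  (D2 false true ω * obsD1 Z D1 ω + D2 false false ω * (1 - obsD1 Z D1 ω)) * (1 - Z ω)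

/-- Summary treatment `D∧ = D1·D2`. -/
def obsDand (Z : Ω → ℝ) (D1 : Bool → Ω → ℝ) (D2 : Bool → Bool → Ω → ℝ) (ω : Ω) : ℝ :=
  obsD1 Z D1 ω * obsD2 Z D1 D2 ω

/-- Summary treatment `D∨ = D1 + D2 − D1·D2`. -/
def obsDor (Z : Ω → ℝ) (D1 : Bool → Ω → ℝ) (D2 : Bool → Bool → Ω → ℝ) (ω : Ω) : ℝ :=
  obsD1 Z D1 ω + obsD2 Z D1 D2 ω - obsD1 Z D1 ω * obsD2 Z D1 D2 ω

/-- Observed outcome `Y = Σ_{d1,d2} Y(Z,d1,d2)·1{D1=d1, D2=d2}`, written out using that the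
observed treatments and the instrument are {0,1}-valued. The first index of `Yp` is `z`, the
second is `d1`, the third is `d2`. -/
def obsY (Z : Ω → ℝ) (D1 : Bool → Ω → ℝ) (D2 : Bool → Bool → Ω → ℝ)
    (Yp : Bool → Bool → Bool → Ω → ℝ) (ω : Ω) : ℝ :=
  (Yp true true true ω * obsD1 Z D1 ω * obsD2 Z D1 D2 ω +
   Yp true false true ω * (1 - obsD1 Z D1 ω) * obsD2 Z D1 D2 ω +
   Yp true true false ω * obsD1 Z D1 ω * (1 - obsD2 Z D1 D2 ω) +
   Yp true false false ω * (1 - obsD1 Z D1 ω) * (1 - obsD2 Z D1 D2 ω)) * Z ω +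
  (Yp false true true ω * obsD1 Z D1 ω * obsD2 Z D1 D2 ω +
   Yp false false true ω * (1 - obsD1 Z D1 ω) * obsD2 Z D1 D2 ω +
   Yp false true false ω * obsD1 Z D1 ω * (1 - obsD2 Z D1 D2 ω) +
   Yp false false false ω * (1 - obsD1 Z D1 ω) * (1 - obsD2 Z D1 D2 ω)) * (1 - Z ω)

/-- `ΔE[A|Z] := E[A | Z = 1] − E[A | Z = 0]`, expectations under conditional measures. -/
def dE (μ : Measure Ω) (Z A : Ω → ℝ) : ℝ :=
  (∫ ω, A ω ∂(μ[|Z ⁻¹' {1}])) - (∫ ω, A ω ∂(μ[|Z ⁻¹' {0}]))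

/-- The full-complier event `{C1,C2}`. -/
def CCev (D1 : Bool → Ω → ℝ) (D2 : Bool → Bool → Ω → ℝ) : Set Ω :=
  {ω | D1 true ω - D1 false ω = 1 ∧ D2 true true ω - D2 false false ω = 1}

/-- The mover event `{C1,N2}`. -/
def CNev (D1 : Bool → Ω → ℝ) (D2 : Bool → Bool → Ω → ℝ) : Set Ω :=
  {ω | D1 true ω - D1 false ω = 1 ∧ D2 true true ω = 0 ∧ D2 false false ω = 0}

/-- The mover event `{C1,A2}`. -/
def CAev (D1 : Bool → Ω → ℝ) (D2 : Bool → Bool → Ω → ℝ) : Set Ω :=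
  {ω | D1 true ω - D1 false ω = 1 ∧ D2 true true ω = 1 ∧ D2 false false ω = 1}

/-- The mover event `{N1,C2}`. -/
def NCev (D1 : Bool → Ω → ℝ) (D2 : Bool → Bool → Ω → ℝ) : Set Ω :=
  {ω | D1 true ω = 0 ∧ D1 false ω = 0 ∧ D2 true false ω - D2 false false ω = 1}

/-- The mover event `{A1,C2}`. -/
def ACev (D1 : Bool → Ω → ℝ) (D2 : Bool → Bool → Ω → ℝ) : Set Ω :=
  {ω | D1 true ω = 1 ∧ D1 false ω = 1 ∧ D2 true true ω - D2 false true ω = 1}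

theorem integral_cond_of_indep {β : Type*} [MeasurableSpace β]
    (μ : Measure Ω) [IsProbabilityMeasure μ] (Z : Ω → ℝ) (W : Ω → β)
    (hZ : Measurable Z) (hW : Measurable W) (h : IndepFun W Z μ)
    (z : ℝ) (hz : μ (Z ⁻¹' {z}) ≠ 0) (φ : β → ℝ) (hφ : Measurable φ)
    (A : Ω → ℝ) (hA : ∀ ω, Z ω = z → A ω = φ (W ω)) :
    ∫ ω, A ω ∂(μ[|Z ⁻¹' {z}]) = ∫ ω, φ (W ω) ∂μ := by
  have hs : MeasurableSet (Z ⁻¹' {z}) := hZ (measurableSet_singleton z)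
  have hgm : Measurable (({z} : Set ℝ).indicator (fun _ => (1 : ℝ))) :=
    measurable_const.indicator (measurableSet_singleton z)
  have key := h.integral_fun_comp_mul_comp (f := φ)
    (g := ({z} : Set ℝ).indicator (fun _ => (1 : ℝ)))
    hW.aemeasurable hZ.aemeasurable hφ.aestronglyMeasurable hgm.aestronglyMeasurable
  have e1 : ∀ ω, φ (W ω) * ({z} : Set ℝ).indicator (fun _ => (1 : ℝ)) (Z ω)
      = (Z ⁻¹' {z}).indicator A ω := by
    intro ω
    by_cases hω : Z ω = z
    · simp [Set.indicator, hω, hA ω hω]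
    · simp [Set.indicator, hω]
  have e2 : ∀ ω, ({z} : Set ℝ).indicator (fun _ => (1 : ℝ)) (Z ω)
      = (Z ⁻¹' {z}).indicator (fun _ => (1 : ℝ)) ω := by
    intro ω
    simp [Set.indicator]
  simp_rw [e1, e2] at key
  rw [integral_indicator hs, integral_indicator hs] at key
  simp only [integral_const, smul_eq_mul, mul_one, measureReal_restrict_apply_univ] at key
  have hne : μ.real (Z ⁻¹' {z}) ≠ 0 := by
    simp [Measure.real, ENNReal.toReal_eq_zero_iff, hz]
  rw [ProbabilityTheory.cond, integral_smul_measure, key, ENNReal.toReal_inv]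
  change (μ.real (Z ⁻¹' {z}))⁻¹ • _ = _
  rw [smul_eq_mul]
  field_simp

theorem stmt_18
    (μ : Measure Ω) [IsProbabilityMeasure μ]
    (Z : Ω → ℝ) (D1 : Bool → Ω → ℝ) (D2 : Bool → Bool → Ω → ℝ)
    (Yp : Bool → Bool → Bool → Ω → ℝ)
    (hZmeas : Measurable Z)
    (hD1meas : ∀ b, Measurable (D1 b))
    (hD2meas : ∀ b b', Measurable (D2 b b'))
    (hYmeas : ∀ z d1 d2, Measurable (Yp z d1 d2))
    (hYint : ∀ z d1 d2, Integrable (Yp z d1 d2) μ)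
    (hZ01 : ∀ ω, Z ω = 0 ∨ Z ω = 1)
    (hZpos : 0 < μ (Z ⁻¹' {1})) (hZlt : μ (Z ⁻¹' {1}) < 1)
    (hD101 : ∀ b ω, D1 b ω = 0 ∨ D1 b ω = 1)
    (hD201 : ∀ b b' ω, D2 b b' ω = 0 ∨ D2 b b' ω = 1)
    (hindep : IndepFun
      (fun ω => ((fun b => D1 b ω), (fun b b' => D2 b b' ω), (fun z d1 d2 => Yp z d1 d2 ω))) Z μ)
    (hrel1 : 0 < dE μ Z (obsD1 Z D1))
    (hrel2 : 0 < dE μ Z (obsD2 Z D1 D2))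
    (hrelAnd : 0 < dE μ Z (obsDand Z D1 D2))
    (hrelOr : 0 < dE μ Z (obsDor Z D1 D2))
    (hmono1 : ∀ᵐ ω ∂μ, D1 false ω ≤ D1 true ω)
    (hmono2 : ∀ᵐ ω ∂μ,
      D2 false true ω * D1 false ω + D2 false false ω * (1 - D1 false ω) ≤
        D2 true true ω * D1 true ω + D2 true false ω * (1 - D1 true ω))
    (hexcl : ∀ d1 d2, ∀ᵐ ω ∂μ, Yp true d1 d2 ω = Yp false d1 d2 ω) :
    dE μ Z (fun ω => (obsDand Z D1 D2 ω - obsD2 Z D1 D2 ω) * obsY Z D1 D2 Yp ω) =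
      (∫ ω in CAev D1 D2, Yp true false true ω ∂μ) -
        (∫ ω in NCev D1 D2, Yp true false true ω ∂μ) ∧
    (μ (CAev D1 D2) = μ (NCev D1 D2) → 0 < μ (CAev D1 D2) →
      dE μ Z (fun ω => (obsDand Z D1 D2 ω - obsD2 Z D1 D2 ω) * obsY Z D1 D2 Yp ω) =
        ((∫ ω in CAev D1 D2, Yp true false true ω ∂μ) / (μ (CAev D1 D2)).toReal -
          (∫ ω in NCev D1 D2, Yp true false true ω ∂μ) / (μ (NCev D1 D2)).toReal) *
          (μ (CAev D1 D2)).toReal) := by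
  have hW : Measurable (fun ω => ((fun b => D1 b ω), (fun b b' => D2 b b' ω),
      (fun z d1 d2 => Yp z d1 d2 ω)) :
      Ω → (Bool → ℝ) × (Bool → Bool → ℝ) × (Bool → Bool → Bool → ℝ)) := by
    refine Measurable.prodMk ?_ (Measurable.prodMk ?_ ?_)
    · exact measurable_pi_lambda _ hD1meas
    · exact measurable_pi_lambda _ fun b => measurable_pi_lambda _ fun b' => hD2meas b b'
    · exact measurable_pi_lambda _ fun b => measurable_pi_lambda _ fun b' =>
        measurable_pi_lambda _ fun b'' => hYmeas b b' b''
  have hz1 : μ (Z ⁻¹' {1}) ≠ 0 := hZpos.ne'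
  have hz0 : μ (Z ⁻¹' {0}) ≠ 0 := by
    intro h0
    have hu : (Set.univ : Set Ω) ⊆ Z ⁻¹' {0} ∪ Z ⁻¹' {1} := by
      intro ω _
      rcases hZ01 ω with h | h <;> simp [h]
    have h1 := (measure_mono (μ := μ) hu).trans (measure_union_le _ _)
    rw [h0, zero_add, measure_univ] at h1
    exact absurd hZlt (not_lt.mpr h1)
  have I1 := integral_cond_of_indep μ Z _ hZmeas hW hindep 1 hz1
    (fun p => -((1 - p.1 true) * p.2.1 true false * p.2.2 true false true)) (by fun_prop)
    (fun ω => (obsDand Z D1 D2 ω - obsD2 Z D1 D2 ω) * obsY Z D1 D2 Yp ω) (by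
      intro ω hω
      simp only [obsDand, obsY, obsD2, obsD1, hω]
      rcases hD101 true ω with h | h <;> rcases hD201 true true ω with h' | h' <;>
        rcases hD201 true false ω with h'' | h'' <;> simp [h, h', h''])
  have I0 := integral_cond_of_indep μ Z _ hZmeas hW hindep 0 hz0
    (fun p => -((1 - p.1 false) * p.2.1 false false * p.2.2 false false true)) (by fun_prop)
    (fun ω => (obsDand Z D1 D2 ω - obsD2 Z D1 D2 ω) * obsY Z D1 D2 Yp ω) (by
      intro ω hω
      simp only [obsDand, obsY, obsD2, obsD1, hω]
      rcases hD101 false ω with h | h <;> rcases hD201 false true ω with h' | h' <;>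
        rcases hD201 false false ω with h'' | h'' <;> simp [h, h', h''])
  have hCA : MeasurableSet (CAev D1 D2) := by
    refine MeasurableSet.inter ?_ (MeasurableSet.inter ?_ ?_)
    · exact ((hD1meas true).sub (hD1meas false)) (measurableSet_singleton 1)
    · exact (hD2meas true true) (measurableSet_singleton 1)
    · exact (hD2meas false false) (measurableSet_singleton 1)
  have hNC : MeasurableSet (NCev D1 D2) := by
    refine MeasurableSet.inter ?_ (MeasurableSet.inter ?_ ?_)
    · exact (hD1meas true) (measurableSet_singleton 0)
    · exact (hD1meas false) (measurableSet_singleton 0)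
    · exact ((hD2meas true false).sub (hD2meas false false)) (measurableSet_singleton 1)
  have int : ∀ b, Integrable
      (fun ω => -((1 - D1 b ω) * D2 b false ω * Yp b false true ω)) μ := by
    intro b
    refine (hYint b false true).mono ?_ ?_
    · have := hD1meas b
      have := hD2meas b false
      have := hYmeas b false true
      exact Measurable.aestronglyMeasurable (by fun_prop)
    · refine Filter.Eventually.of_forall fun ω => ?_
      rcases hD101 b ω with h | h <;> rcases hD201 b false ω with h' | h' <;> simp [h, h']
  have main : dE μ Z (fun ω => (obsDand Z D1 D2 ω - obsD2 Z D1 D2 ω) * obsY Z D1 D2 Yp ω) =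
      (∫ ω in CAev D1 D2, Yp true false true ω ∂μ) -
        (∫ ω in NCev D1 D2, Yp true false true ω ∂μ) := by
    rw [dE, I1, I0, ← integral_sub (int true) (int false), ← integral_indicator hCA,
      ← integral_indicator hNC, ← integral_sub ((hYint _ _ _).indicator hCA)
        ((hYint _ _ _).indicator hNC)]
    refine integral_congr_ae ?_
    filter_upwards [hmono1, hmono2, hexcl false true] with ω h1 h2 h3
    simp only [Set.indicator, CAev, NCev, Set.mem_ofPred_eq, h3]
    rcases hD101 true ω with a | a <;> rcases hD101 false ω with b | b <;>
      rcases hD201 true true ω with c | c <;> rcases hD201 true false ω with d | d <;>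
      rcases hD201 false false ω with e | e <;>
      simp only [a, b, c, d, e] at h1 h2 ⊢ <;>
      first
      | (norm_num; done)
      | (exfalso; linarith)
  refine ⟨main, fun heq hpos => ?_⟩
  have hne : (μ (CAev D1 D2)).toReal ≠ 0 :=
    (ENNReal.toReal_pos hpos.ne' (measure_ne_top _ _)).ne'
  rw [main, ← heq]
  field_simp
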